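/- Let K ⊂ ℝⁿ be compact, let H : ℝ × K → ℝⁿ be RAP in t uniformly with respect to x ∈ K, and suppose H is Lipschitz in x uniformly in t: there is L ≥ 0 with ‖H(t,x) − H(t,y)‖ ≤ L‖x − y‖ for all t ∈ ℝ and x, y ∈ K. Let φ : ℝ → K be RAP. Then the function t ↦ H(t, φ(t)) is RAP. -/

import Mathlib

open MeasureTheory Filter

def RelativelyDense (S : Set ℝ) : Prop :=
  ∃ l > 0, ∀ a : ℝ, ∃ τ ∈ S, τ ∈ Set.Icc a (a + l)

def RAP {E : Type*} [NormedAddCommGroup E] (f : ℝ → E) : Prop :=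
  (∃ C, ∀ t, ‖f t‖ ≤ C) ∧ UniformContinuous f ∧
  ∀ ε > 0, RelativelyDense
    {τ | Filter.limsup (fun t => ‖f (t + τ) - f t‖) (Filter.cocompact ℝ) < ε}

def RAPUniform {E F : Type*} [NormedAddCommGroup E] [NormedAddCommGroup F]
    (f : ℝ → E → F) (S : Set E) : Prop :=
  (∃ C, ∀ t, ∀ x ∈ S, ‖f t x‖ ≤ C) ∧
  UniformContinuousOn (fun p : ℝ × E => f p.1 p.2) (Set.univ ×ˢ S) ∧
  ∀ ε > 0, RelativelyDense
    {τ | Filter.limsup (fun t => ⨆ x ∈ S, ‖f (t + τ) x - f t x‖) (Filter.cocompact ℝ) < ε}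

/-!
A uniformly continuous function on a product is uniformly equicontinuous in each variable, so `H`
becomes a uniformly continuous curve `t ↦ H t` in the space of functions `S → F` with the topology
of uniform convergence, and evaluation at points of `S` is uniformly continuous on the range of that
curve. Hence `t ↦ H t (φ t)` is the image of the pair `t ↦ (H t, φ t)` under a uniformly continuous
map, and it remains to find common almost periods for the two components. If `A` and `B` are sets of
remote almost periods, choose `α a ∈ A` and `β a ∈ B` at bounded distance from each `a`; the numbers
`α a - β a` are bounded, so, up to `δ`, finitely many of them occur. When those of `a` and `b`
agree up to `δ`, so do the almost periods `α a - α b` and `β a - β b`, and uniform continuity allows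
replacing the second by the first.
-/

theorem exists_finite_forall_dist_lt_of_totallyBounded_range {ι X : Type*} [PseudoMetricSpace X]
    {f : ι → X} (hf : TotallyBounded (Set.range f)) {δ : ℝ} (hδ : 0 < δ) :
    ∃ s : Set ι, s.Finite ∧ ∀ a, ∃ b ∈ s, dist (f a) (f b) < δ := by
  have hnet := Metric.finite_approx_of_totallyBounded hf δ hδ
  rw [← Set.image_univ, Set.exists_subset_image_finite_and] at hnet
  obtain ⟨s, -, hs, hcover⟩ := hnet
  exact ⟨s, hs, fun a => by simpa using hcover (Set.mem_image_of_mem f (Set.mem_univ a))⟩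

namespace RelativelyDense

theorem mono {A B : Set ℝ} (hA : RelativelyDense A) (hAB : A ⊆ B) : RelativelyDense B := by
  obtain ⟨l, hl, hA⟩ := hA
  refine ⟨l, hl, fun a => ?_⟩
  obtain ⟨τ, hτA, hτ⟩ := hA a
  exact ⟨τ, hAB hτA, hτ⟩

open scoped Pointwise in
theorem sub_inter_thickening_sub {A B : Set ℝ} (hA : RelativelyDense A) (hB : RelativelyDense B)
    {δ : ℝ} (hδ : 0 < δ) : RelativelyDense ((A - A) ∩ Metric.thickening δ (B - B)) := by
  obtain ⟨l, hl, hA⟩ := hA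
  obtain ⟨m, -, hB⟩ := hB
  choose α hαA hα using hA
  choose β hβB hβ using hB
  have hbdd : Set.range (fun a => α a - β a) ⊆ Set.Icc (-m) l := by
    rintro _ ⟨a, rfl⟩
    constructor <;> linarith [(hα a).1, (hα a).2, (hβ a).1, (hβ a).2]
  obtain ⟨s, hs, hnet⟩ := exists_finite_forall_dist_lt_of_totallyBounded_range
    (isCompact_Icc.totallyBounded.subset hbdd) hδ
  obtain ⟨R, hR, hsR⟩ := hs.isBounded.exists_pos_norm_le
  refine ⟨2 * (R + l), by positivity, fun c => ?_⟩
  let a := c + R + l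
  obtain ⟨b, hbs, hab⟩ := hnet a
  refine ⟨α a - α b, ⟨Set.sub_mem_sub (hαA a) (hαA b), ?_⟩, ?_⟩
  · refine Metric.mem_thickening_iff.mpr ⟨β a - β b, Set.sub_mem_sub (hβB a) (hβB b), ?_⟩
    rwa [Real.dist_eq, sub_sub_sub_comm, ← Real.dist_eq]
  · have hbR := abs_le.mp (hsR b hbs)
    constructor <;> linarith [(hα a).1, (hα a).2, (hα b).1, (hα b).2]

end RelativelyDense

section RemoteAlmostPeriods

open scoped Uniformity SetRel Pointwise

variable {X Y : Type*}

/-- The remote almost periods of `f` up to the entourage `V`: the translations `τ` for which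
`f (t + τ)` and `f t` are `V`-close as soon as `|t|` is large. -/
def remoteAlmostPeriods (f : ℝ → X) (V : SetRel X X) : Set ℝ :=
  {τ | ∀ᶠ t in cocompact ℝ, (f (t + τ), f t) ∈ V}

theorem remoteAlmostPeriods_mono (f : ℝ → X) {V W : SetRel X X} (hVW : V ⊆ W) :
    remoteAlmostPeriods f V ⊆ remoteAlmostPeriods f W :=
  fun _ hτ => hτ.mono fun _ ht => hVW ht

theorem remoteAlmostPeriods_prodMk (f : ℝ → X) (g : ℝ → Y) (V : SetRel X X) (W : SetRel Y Y) :
    remoteAlmostPeriods (fun t => (f t, g t)) (entourageProd V W) =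
      remoteAlmostPeriods f V ∩ remoteAlmostPeriods g W := by
  ext τ
  exact eventually_and

theorem remoteAlmostPeriods_sub_subset (f : ℝ → X) (V : SetRel X X) [V.IsSymm] :
    remoteAlmostPeriods f V - remoteAlmostPeriods f V ⊆ remoteAlmostPeriods f (V ○ V) := by
  rintro _ ⟨τ, hτ, σ, hσ, rfl⟩
  have hshift : Tendsto (fun t : ℝ => t - σ) (cocompact ℝ) (cocompact ℝ) :=
    (Homeomorph.subRight σ).isClosedEmbedding.tendsto_cocompact
  filter_upwards [hshift.eventually hτ, hshift.eventually hσ] with t htτ htσ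
  rw [sub_add_eq_add_sub, add_sub_assoc] at htτ
  rw [sub_add_cancel] at htσ
  exact SetRel.prodMk_mem_comp htτ (V.symm htσ)

theorem exists_thickening_remoteAlmostPeriods_subset [UniformSpace X] {f : ℝ → X}
    (hf : UniformContinuous f) {V : SetRel X X} (hV : V ∈ 𝓤 X) (W : SetRel X X) :
    ∃ δ > 0, Metric.thickening δ (remoteAlmostPeriods f W) ⊆ remoteAlmostPeriods f (V ○ W) := by
  obtain ⟨δ, hδ, hfδ⟩ := Metric.mem_uniformity_dist.mp (hf hV)
  refine ⟨δ, hδ, fun τ hτ => ?_⟩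
  obtain ⟨σ, hσ, hτσ⟩ := Metric.mem_thickening_iff.mp hτ
  filter_upwards [hσ] with t ht
  exact SetRel.prodMk_mem_comp (hfδ ((dist_add_left t τ σ).trans_lt hτσ)) ht

/-- Remote almost periodicity for functions valued in a uniform space. Boundedness, which has no
meaning there, is left out. -/
structure RemotelyAlmostPeriodic [UniformSpace X] (f : ℝ → X) : Prop where
  uniformContinuous : UniformContinuous f
  relativelyDense : ∀ V ∈ 𝓤 X, RelativelyDense (remoteAlmostPeriods f V)

namespace RemotelyAlmostPeriodic

variable [UniformSpace X] [UniformSpace Y]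

theorem iff_of_hasBasis {ι : Sort*} {p : ι → Prop} {V : ι → SetRel X X} (hV : (𝓤 X).HasBasis p V)
    {f : ℝ → X} : RemotelyAlmostPeriodic f ↔
      UniformContinuous f ∧ ∀ i, p i → RelativelyDense (remoteAlmostPeriods f (V i)) := by
  refine ⟨fun hf => ⟨hf.1, fun i hi => hf.2 _ (hV.mem_of_mem hi)⟩, fun hf => ⟨hf.1, fun W hW => ?_⟩⟩
  obtain ⟨i, hi, hVW⟩ := hV.mem_iff.mp hW
  exact (hf.2 i hi).mono (remoteAlmostPeriods_mono f hVW)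

theorem prodMk {f : ℝ → X} {g : ℝ → Y} (hf : RemotelyAlmostPeriodic f)
    (hg : RemotelyAlmostPeriodic g) : RemotelyAlmostPeriodic fun t => (f t, g t) := by
  refine (iff_of_hasBasis ((𝓤 X).basis_sets.uniformity_prod (𝓤 Y).basis_sets)).mpr
    ⟨hf.uniformContinuous.prodMk hg.uniformContinuous, fun ⟨V, W⟩ ⟨hV, hW⟩ => ?_⟩
  obtain ⟨V', hV', _, hV'V⟩ := comp_symm_mem_uniformity_sets hV
  obtain ⟨W', hW', _, hW'W⟩ := comp_comp_symm_mem_uniformity_sets hW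
  obtain ⟨δ, hδ, hgδ⟩ := exists_thickening_remoteAlmostPeriods_subset hg.uniformContinuous hW'
    (W' ○ W')
  rw [remoteAlmostPeriods_prodMk]
  refine ((hf.relativelyDense V' hV').sub_inter_thickening_sub
    (hg.relativelyDense W' hW') hδ).mono (Set.inter_subset_inter ?_ ?_)
  · exact (remoteAlmostPeriods_sub_subset f V').trans (remoteAlmostPeriods_mono f hV'V)
  · calc Metric.thickening δ (remoteAlmostPeriods g W' - remoteAlmostPeriods g W')
        ⊆ Metric.thickening δ (remoteAlmostPeriods g (W' ○ W')) :=
          Metric.thickening_subset_of_subset δ (remoteAlmostPeriods_sub_subset g W')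
      _ ⊆ remoteAlmostPeriods g (W' ○ (W' ○ W')) := hgδ
      _ ⊆ remoteAlmostPeriods g W :=
          remoteAlmostPeriods_mono g (by rwa [← SetRel.comp_assoc])

theorem comp_uniformContinuousOn {f : ℝ → X} (hf : RemotelyAlmostPeriodic f) {g : X → Y}
    {s : Set X} (hg : UniformContinuousOn g s) (hfs : ∀ t, f t ∈ s) :
    RemotelyAlmostPeriodic fun t => g (f t) := by
  refine ⟨uniformContinuousOn_univ.mp <| hg.comp
    (uniformContinuousOn_univ.mpr hf.uniformContinuous) fun t _ => hfs t, fun V hV => ?_⟩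
  refine (hf.relativelyDense _ (mem_inf_principal.mp (hg hV))).mono fun τ hτ => ?_
  exact hτ.mono fun t ht => ht ⟨hfs _, hfs t⟩

theorem codRestrict {f : ℝ → X} (hf : RemotelyAlmostPeriodic f) {s : Set X} (hfs : ∀ t, f t ∈ s) :
    RemotelyAlmostPeriodic (Set.codRestrict f s hfs) := by
  refine ⟨hf.uniformContinuous.subtype_mk hfs, fun V hV => ?_⟩
  obtain ⟨W, hW, hWV⟩ := mem_comap.mp hV
  exact (hf.relativelyDense W hW).mono fun τ hτ => hτ.mono fun t ht => hWV ht

end RemotelyAlmostPeriodic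

end RemoteAlmostPeriods

section Equicontinuity

open scoped Uniformity UniformConvergence

variable {α β γ : Type*} [UniformSpace β] [UniformSpace γ]

theorem uniformEquicontinuous_of_uniformContinuous_uncurry [UniformSpace α] {F : α → β → γ}
    (hF : UniformContinuous (Function.uncurry F)) : UniformEquicontinuous F := by
  intro V hV
  obtain ⟨⟨U, W⟩, ⟨hU, hW⟩, hUW⟩ :=
    ((𝓤 α).basis_sets.uniformity_prod (𝓤 β).basis_sets).mem_iff.mp (hF hV)
  filter_upwards [hW] with ⟨x, y⟩ hxy a
  exact @hUW ((a, x), (a, y)) ⟨refl_mem_uniformity hU, hxy⟩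

theorem uniformContinuousOn_eval_of_uniformEquicontinuous {ι : Type*} {F : ι → β → γ}
    (hF : UniformEquicontinuous F) :
    UniformContinuousOn (fun p : (β →ᵤ γ) × β => UniformFun.toFun p.1 p.2)
      (Set.range (UniformFun.ofFun ∘ F) ×ˢ Set.univ) := by
  intro V hV
  obtain ⟨W, hW, hWV⟩ := comp_mem_uniformity_sets hV
  refine mem_inf_principal.mpr <| mem_of_superset
    (entourageProd_mem_uniformity ((UniformFun.hasBasis_uniformity β γ).mem_of_mem hW) (hF W hW)) ?_
  rintro ⟨⟨h, x⟩, ⟨_, y⟩⟩ ⟨hclose, hxy⟩ ⟨-, ⟨i, rfl⟩, -⟩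
  exact hWV (SetRel.prodMk_mem_comp (hclose x) (hxy i))

end Equicontinuity

theorem forall_relativelyDense_limsup_lt_iff {α : Type*} {l : Filter α} [l.NeBot] {u : ℝ → α → ℝ}
    {C : ℝ} (hu : ∀ τ t, u τ t ∈ Set.Icc 0 C) :
    (∀ ε > 0, RelativelyDense {τ | limsup (u τ) l < ε}) ↔
      ∀ ε > 0, RelativelyDense {τ | ∀ᶠ t in l, u τ t < ε} := by
  constructor <;> intro h ε hε
  · refine (h ε hε).mono fun τ hτ => ?_
    exact eventually_lt_of_limsup_lt hτ (isBoundedUnder_of ⟨C, fun t => (hu τ t).2⟩)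
  · refine (h (ε / 2) (half_pos hε)).mono fun τ hτ => ?_
    have hcobdd : IsCoboundedUnder (· ≤ ·) l (u τ) :=
      (isBoundedUnder_of ⟨0, fun t => (hu τ t).1⟩).isCoboundedUnder_le
    exact (limsup_le_of_le hcobdd (hτ.mono fun _ ht => ht.le)).trans_lt (half_lt_self hε)

section Composition

variable {E F : Type*} [NormedAddCommGroup E] [NormedAddCommGroup F]

theorem rap_iff {f : ℝ → E} : RAP f ↔ (∃ C, ∀ t, ‖f t‖ ≤ C) ∧ RemotelyAlmostPeriodic f := by
  refine and_congr_right fun ⟨C, hC⟩ => ?_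
  rw [RemotelyAlmostPeriodic.iff_of_hasBasis Metric.uniformity_basis_dist]
  refine and_congr_right fun _ => ?_
  rw [forall_relativelyDense_limsup_lt_iff (C := C + C)
    fun τ t => ⟨norm_nonneg _, norm_sub_le_of_le (hC _) (hC _)⟩]
  simp only [remoteAlmostPeriods, dist_eq_norm, Set.mem_ofPred_eq]

namespace RAPUniform

variable {H : ℝ → E → F} {S : Set E}

theorem uniformContinuous_uncurry_domRestrict (hH : RAPUniform H S) :
    UniformContinuous (Function.uncurry fun t => S.domRestrict (H t)) := by
  have hincl : UniformContinuous fun p : ℝ × S => (p.1, (p.2 : E)) :=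
    uniformContinuous_fst.prodMk (uniformContinuous_subtype_val.comp uniformContinuous_snd)
  exact uniformContinuousOn_univ.mp <|
    hH.2.1.comp (uniformContinuousOn_univ.mpr hincl) fun p _ => ⟨trivial, p.2.2⟩

theorem relativelyDense_eventually_forall_lt (hH : RAPUniform H S) {ε : ℝ} (hε : 0 < ε) :
    RelativelyDense {τ | ∀ᶠ t in cocompact ℝ, ∀ x ∈ S, ‖H (t + τ) x - H t x‖ < ε} := by
  obtain ⟨⟨C, hC⟩, -, hdense⟩ := hH
  -- `C` may be negative when `S` is empty
  have hbound : ∀ τ t, ∀ x ∈ S, ‖H (t + τ) x - H t x‖ ≤ |C + C| := fun τ t x hx =>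
    (norm_sub_le_of_le (hC _ x hx) (hC t x hx)).trans (le_abs_self _)
  have hsup : ∀ τ t, ⨆ x ∈ S, ‖H (t + τ) x - H t x‖ ∈ Set.Icc 0 |C + C| := fun τ t =>
    ⟨Real.iSup_nonneg fun _ => Real.iSup_nonneg fun _ => norm_nonneg _,
      Real.iSup_le (fun x => Real.iSup_le (hbound τ t x) (abs_nonneg _)) (abs_nonneg _)⟩
  refine ((forall_relativelyDense_limsup_lt_iff hsup).mp hdense ε hε).mono fun τ hτ => ?_
  filter_upwards [hτ] with t ht x hx
  have hbdd : BddAbove (⋃ y, Set.range fun _ : y ∈ S => ‖H (t + τ) y - H t y‖) :=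
    ⟨|C + C|, Set.iUnion_subset fun y => Set.range_subset_iff.mpr (hbound τ t y)⟩
  exact (le_ciSup₂ hbdd x hx).trans_lt ht

theorem remotelyAlmostPeriodic_ofFun (hH : RAPUniform H S) :
    RemotelyAlmostPeriodic fun t => UniformFun.ofFun (S.domRestrict (H t)) := by
  rw [RemotelyAlmostPeriodic.iff_of_hasBasis
    (UniformFun.hasBasis_uniformity_of_basis S F Metric.uniformity_basis_dist)]
  constructor
  · exact uniformEquicontinuous_iff_uniformContinuous.mp <|
      uniformEquicontinuous_of_uniformContinuous_uncurry <|
        hH.uniformContinuous_uncurry_domRestrict.comp uniformContinuous_swap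
  · intro ε hε
    refine (hH.relativelyDense_eventually_forall_lt hε).mono fun τ hτ => ?_
    filter_upwards [hτ] with t ht x
    exact (dist_eq_norm _ _).trans_lt (ht x x.2)

end RAPUniform

theorem RAP_comp_general {H : ℝ → E → F} {S : Set E} (hH : RAPUniform H S) {φ : ℝ → E} (hφ : RAP φ)
    (hφS : ∀ t, φ t ∈ S) : RAP fun t => H t (φ t) := by
  obtain ⟨C, hC⟩ := hH.1
  have heval := uniformContinuousOn_eval_of_uniformEquicontinuous <|
    uniformEquicontinuous_of_uniformContinuous_uncurry hH.uniformContinuous_uncurry_domRestrict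
  have hpair := hH.remotelyAlmostPeriodic_ofFun.prodMk ((rap_iff.mp hφ).2.codRestrict hφS)
  exact rap_iff.mpr ⟨⟨C, fun t => hC t _ (hφS t)⟩,
    hpair.comp_uniformContinuousOn heval fun t => ⟨⟨t, rfl⟩, trivial⟩⟩

end Composition

/-- composition of an RAP function with a function RAP in `t`
uniformly (and Lipschitz in `x`) is RAP. -/
theorem RAP_comp {n : ℕ} (K : Set (EuclideanSpace ℝ (Fin n))) (hK : IsCompact K)
    (H : ℝ → EuclideanSpace ℝ (Fin n) → EuclideanSpace ℝ (Fin n))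
    (hH : RAPUniform H K)
    (L : ℝ) (hL : 0 ≤ L)
    (hlip : ∀ t : ℝ, ∀ x ∈ K, ∀ y ∈ K, ‖H t x - H t y‖ ≤ L * ‖x - y‖)
    (φ : ℝ → EuclideanSpace ℝ (Fin n)) (hφ : RAP φ) (hφK : ∀ t, φ t ∈ K) :
    RAP (fun t => H t (φ t)) :=
  RAP_comp_general hH hφ hφK
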